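/- For every continuous nondecreasing function f : ℝ → ℝ there exists a sequence (pₙ) of real polynomials, each nondecreasing on all of ℝ, such that pₙ(x) → f(x) as n → ∞ for every x ∈ ℝ. -/

import Mathlib

lemma exists_poly_antideriv (q : Polynomial ℝ) : ∃ P : Polynomial ℝ, Polynomial.derivative P = q := by
  induction q using Polynomial.induction_on' with
  | add p q hp hq =>
    obtain ⟨P, rfl⟩ := hp
    obtain ⟨Q, rfl⟩ := hq
    exact ⟨P + Q, by simp⟩
  | monomial n a =>
    refine ⟨Polynomial.monomial (n + 1) (a / (n + 1)), ?_⟩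
    rw [Polynomial.derivative_monomial]
    have : (n : ℝ) + 1 ≠ 0 := by positivity
    simp
    field_simp

lemma exists_mono_poly (G G' : ℝ → ℝ) (hG : ∀ x, HasDerivAt G (G' x) x) (hc : Continuous G')
    (h0 : ∀ x, 0 ≤ G' x) (N ε : ℝ) (hN : 0 ≤ N) (hε : 0 < ε) :
    ∃ p : Polynomial ℝ, Monotone (fun x : ℝ => p.eval x) ∧
      ∀ x ∈ Set.Icc (-N) N, |p.eval x - G x| ≤ ε := by
  have hr : Continuous (fun x => Real.sqrt (G' x)) := hc.sqrt
  obtain ⟨M, hM⟩ := (isCompact_Icc (a := -N) (b := N)).exists_bound_of_continuousOn hr.continuousOn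
  have hM0 : 0 ≤ M := (norm_nonneg _).trans (hM 0 ⟨by linarith, hN⟩)
  obtain ⟨δ, hδ, hδ1, hδ2⟩ : ∃ δ : ℝ, 0 < δ ∧ δ ≤ 1 ∧ δ * (2 * M + 1) * N ≤ ε := by
    refine ⟨min 1 (ε / ((2 * M + 1) * (N + 1))), by positivity, min_le_left _ _, ?_⟩
    have h1 : min 1 (ε / ((2 * M + 1) * (N + 1))) ≤ ε / ((2 * M + 1) * (N + 1)) := min_le_right _ _
    rw [le_div_iff₀ (by positivity)] at h1
    have : 0 ≤ min 1 (ε / ((2 * M + 1) * (N + 1))) := by positivity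
    nlinarith [mul_nonneg this (by positivity : 0 ≤ 2 * M + 1)]
  obtain ⟨q, hq⟩ := exists_polynomial_near_of_continuousOn (-N) N _ hr.continuousOn δ hδ
  obtain ⟨P, hP⟩ := exists_poly_antideriv (q ^ 2)
  have hPd : ∀ x, HasDerivAt (fun x => P.eval x) ((q.eval x) ^ 2) x := by
    intro x
    have := P.hasDerivAt x
    rwa [hP, Polynomial.eval_pow] at this
  have hPm : Monotone (fun x : ℝ => P.eval x) :=
    monotone_of_hasDerivAt_nonneg hPd (fun x => sq_nonneg _)
  refine ⟨P + Polynomial.C (G 0 - P.eval 0), ?_, ?_⟩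
  · intro x y hxy
    have := hPm hxy
    simp only [Polynomial.eval_add, Polynomial.eval_C] at this ⊢
    linarith
  · intro x hx
    have key := (convex_Icc (-N) N).norm_image_sub_le_of_norm_hasDerivWithin_le
      (f := fun x => P.eval x - G x) (f' := fun x => (q.eval x) ^ 2 - G' x)
      (C := δ * (2 * M + 1)) (x := 0) (y := x)
      (fun x _ => ((hPd x).sub (hG x)).hasDerivWithinAt) (by
        intro y hy
        have h1 := hq y hy
        have h2 := hM y hy
        rw [Real.norm_eq_abs] at h2 ⊢
        have h3 := Real.sq_sqrt (h0 y)
        set r := Real.sqrt (G' y)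
        rw [← h3, sq_sub_sq, abs_mul, mul_comm]
        have h4 : |Polynomial.eval y q + r| ≤ 2 * M + 1 := by
          rw [abs_le] at h2 ⊢
          rw [abs_lt] at h1
          constructor <;> linarith [h1.1, h1.2, h2.1, h2.2]
        exact mul_le_mul h1.le h4 (abs_nonneg _) hδ.le) ⟨by linarith, hN⟩ hx
    simp only [Real.norm_eq_abs, sub_zero] at key
    have hx' : |x| ≤ N := abs_le.2 hx
    have h5 : δ * (2 * M + 1) * |x| ≤ δ * (2 * M + 1) * N := by gcongr
    simp only [Polynomial.eval_add, Polynomial.eval_C]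
    calc _ = |Polynomial.eval x P - G x - (Polynomial.eval 0 P - G 0)| := by congr 1; ring
      _ ≤ _ := key.trans (h5.trans hδ2)

theorem monotone_continuous_pointwise_limit_of_monotone_polynomials
    (f : ℝ → ℝ) (hf_cont : Continuous f) (hf_mono : Monotone f) :
    ∃ p : ℕ → Polynomial ℝ,
      (∀ n, Monotone (fun x : ℝ => (p n).eval x)) ∧
      ∀ x : ℝ, Filter.Tendsto (fun n => (p n).eval x) Filter.atTop (nhds (f x)) := by
  obtain ⟨F, hF⟩ : ∃ F : ℝ → ℝ, ∀ x, HasDerivAt F (f x) x :=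
    ⟨fun x => ∫ t in (0 : ℝ)..x, f t, fun x => hf_cont.integral_hasStrictDerivAt 0 x |>.hasDerivAt⟩
  have hstep : ∀ n : ℕ, ∃ p : Polynomial ℝ, Monotone (fun x : ℝ => p.eval x) ∧
      ∀ x ∈ Set.Icc (-(n : ℝ)) n,
        |p.eval x - (F (x + 1 / ((n : ℝ) + 1)) - F x) / (1 / ((n : ℝ) + 1))| ≤ 1 / ((n : ℝ) + 1) := by
    intro n
    have hh : 0 < 1 / ((n : ℝ) + 1) := by positivity
    set h := 1 / ((n : ℝ) + 1)
    refine exists_mono_poly (fun x => (F (x + h) - F x) / h) (fun x => (f (x + h) - f x) / h)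
      (fun x => ?_) (by fun_prop) (fun x => ?_) n h (by positivity) hh
    · exact (((hF (x + h)).comp_add_const x h).sub (hF x)).div_const h
    · exact div_nonneg (sub_nonneg.2 (hf_mono (by linarith))) hh.le
  choose p hp1 hp2 using hstep
  refine ⟨p, hp1, fun x => ?_⟩
  have hlim : Filter.Tendsto (fun n : ℕ => 1 / ((n : ℝ) + 1)) Filter.atTop (nhds 0) :=
    tendsto_one_div_add_atTop_nhds_zero_nat
  have hlow : Filter.Tendsto (fun n : ℕ => f x - 1 / ((n : ℝ) + 1)) Filter.atTop (nhds (f x)) := by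
    simpa using tendsto_const_nhds.sub hlim
  have hup : Filter.Tendsto (fun n : ℕ => f (x + 1 / ((n : ℝ) + 1)) + 1 / ((n : ℝ) + 1))
      Filter.atTop (nhds (f x)) := by
    have h1 : Filter.Tendsto (fun n : ℕ => x + 1 / ((n : ℝ) + 1)) Filter.atTop (nhds x) := by
      simpa using tendsto_const_nhds.add hlim
    simpa using ((hf_cont.tendsto x).comp h1).add hlim
  obtain ⟨K, hK⟩ := exists_nat_ge |x|
  have hboth : ∀ n ≥ K, f x - 1 / ((n : ℝ) + 1) ≤ (p n).eval x ∧
      (p n).eval x ≤ f (x + 1 / ((n : ℝ) + 1)) + 1 / ((n : ℝ) + 1) := by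
    intro n hn
    have hnK : (K : ℝ) ≤ n := by exact_mod_cast hn
    have h1 := abs_le.1 (hp2 n x (abs_le.1 (hK.trans hnK)))
    have hh : 0 < 1 / ((n : ℝ) + 1) := by positivity
    set h := 1 / ((n : ℝ) + 1)
    obtain ⟨c, hc, hc2⟩ := exists_hasDerivAt_eq_slope F f (a := x) (b := x + h) (by linarith)
      (fun y _ => (hF y).continuousAt.continuousWithinAt) (fun y _ => hF y)
    rw [add_sub_cancel_left] at hc2
    rw [← hc2] at h1
    have h2 := hf_mono hc.1.le
    have h3 := hf_mono hc.2.le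
    constructor <;> linarith [h1.1, h1.2]
  exact tendsto_of_tendsto_of_tendsto_of_le_of_le' hlow hup
    (Filter.eventually_atTop.2 ⟨K, fun n hn => (hboth n hn).1⟩)
    (Filter.eventually_atTop.2 ⟨K, fun n hn => (hboth n hn).2⟩)
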